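/- For 0<α<1 and λ ≥ 0, the function T(t) = E_α(−λ t^α) satisfies the fractional differential equation (D^α T)(t) + λ T(t) = 0 for all t ∈ (0,∞), together with T(0) = 1, where D^α is the Caputo fractional derivative. -/

import Mathlib

open MeasureTheory Set Filter

/-- The Caputo fractional derivative of order `α` of `f` at `t`:
`(D^α f)(t) = (1/Γ(1−α)) ∫₀ᵗ (t−s)^{−α} f'(s) ds`. -/
noncomputable def caputo (α : ℝ) (f : ℝ → ℝ) (t : ℝ) : ℝ :=
  (1 / Real.Gamma (1 - α)) * ∫ s in (0:ℝ)..t, (t - s) ^ (-α) * deriv f s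

/-- The two-parameter Mittag-Leffler function `E_{α,β}(z) = ∑_{k≥0} z^k/Γ(αk+β)`;
`E_α = E_{α,1}`. -/
noncomputable def ml (α β z : ℝ) : ℝ := ∑' k : ℕ, z ^ k / Real.Gamma (α * k + β)

/-!
Put `K_β(s) = s^(β-1) E_{α,β}(c s^α)`. Integrating the series termwise against `(t - s)^(ν-1)` and
using Euler's beta integral gives `J^ν K_β = K_{β+ν}`, where `J^ν` is the Riemann–Liouville integral
of order `ν`. For `ν = 1` this exhibits `K_{α+1}` as a primitive of `K_α`, so the recurrence
`K_1 = 1 + c K_{α+1}` yields `K_1' = c K_α`. For `ν = 1 - α` it then gives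
`D^α K_1 = J^{1-α} K_1' = c J^{1-α} K_α = c K_1`, and `K_1(t) = E_α(c t^α)`.
-/

open scoped Topology

section Gamma

lemma rpow_mul_exp_neg_le_Gamma {x M : ℝ} (hx : 1 ≤ x) (hM : 0 ≤ M) :
    M ^ (x - 1) * Real.exp (-M) ≤ Real.Gamma x := by
  have hx0 : 0 < x := by linarith
  have hΓ := Real.GammaIntegral_convergent hx0
  have hsub : Ioi M ⊆ Ioi (0 : ℝ) := Ioi_subset_Ioi hM
  calc M ^ (x - 1) * Real.exp (-M)
      = ∫ s in Ioi M, Real.exp (-s) * M ^ (x - 1) := by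
        rw [integral_mul_const, integral_exp_neg_Ioi, mul_comm]
    _ ≤ ∫ s in Ioi M, Real.exp (-s) * s ^ (x - 1) := by
        refine setIntegral_mono_on ((integrableOn_exp_neg_Ioi M).mul_const _) (hΓ.mono_set hsub)
          measurableSet_Ioi fun s hs => ?_
        have : M ^ (x - 1) ≤ s ^ (x - 1) :=
          Real.rpow_le_rpow hM (mem_Ioi.1 hs).le (by linarith)
        gcongr
    _ ≤ ∫ s in Ioi 0, Real.exp (-s) * s ^ (x - 1) := by
        refine setIntegral_mono_set hΓ ?_ hsub.eventuallyLE
        filter_upwards [ae_restrict_mem measurableSet_Ioi] with s hs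
        exact mul_nonneg (Real.exp_pos _).le (Real.rpow_nonneg (mem_Ioi.1 hs).le _)
    _ = Real.Gamma x := (Real.Gamma_eq_integral hx0).symm

lemma inv_Gamma_isBigO_rpow_neg {M : ℝ} (hM : 0 < M) :
    (fun x : ℝ => (Real.Gamma x)⁻¹) =O[atTop] fun x => M ^ (-x) := by
  refine Asymptotics.IsBigO.of_bound (M * Real.exp M) ?_
  filter_upwards [eventually_ge_atTop 1] with x hx
  rw [Real.norm_of_nonneg (inv_nonneg.2 (Real.Gamma_nonneg_of_nonneg (by linarith))),
    Real.norm_of_nonneg (by positivity)]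
  calc (Real.Gamma x)⁻¹ ≤ (M ^ (x - 1) * Real.exp (-M))⁻¹ := by
        gcongr
        exact rpow_mul_exp_neg_le_Gamma hx hM.le
    _ = M * Real.exp M * M ^ (-x) := by
        rw [Real.rpow_sub_one hM.ne', Real.exp_neg, Real.rpow_neg hM.le]
        field_simp

lemma integral_sub_rpow_mul_rpow {β ν t : ℝ} (hβ : 0 < β) (hν : 0 < ν) (ht : 0 < t) :
    ∫ s in (0 : ℝ)..t, (t - s) ^ (ν - 1) * s ^ (β - 1) =
      t ^ (β + ν - 1) * ProbabilityTheory.beta β ν := by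
  have hcomplex := Complex.betaIntegral_scaled β ν ht
  rw [Complex.betaIntegral_eq_Gamma_mul_div _ _ (by simpa) (by simpa)] at hcomplex
  have hintegrand : ∫ s in (0 : ℝ)..t, (s : ℂ) ^ ((β : ℂ) - 1) * ((t : ℂ) - s) ^ ((ν : ℂ) - 1) =
      ∫ s in (0 : ℝ)..t, (((t - s) ^ (ν - 1) * s ^ (β - 1) : ℝ) : ℂ) := by
    refine intervalIntegral.integral_congr fun s hs => ?_
    rw [uIcc_of_le ht.le] at hs
    simp only [Complex.ofReal_mul, Complex.ofReal_cpow hs.1,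
      Complex.ofReal_cpow (sub_nonneg.2 hs.2), Complex.ofReal_sub, Complex.ofReal_one]
    exact mul_comm _ _
  have hpow : (t : ℂ) ^ ((β : ℂ) + ν - 1) = ((t ^ (β + ν - 1) : ℝ) : ℂ) := by
    rw [Complex.ofReal_cpow ht.le]
    push_cast
    rfl
  rw [hintegrand, hpow, intervalIntegral.integral_ofReal, ← Complex.ofReal_add,
    Complex.Gamma_ofReal, Complex.Gamma_ofReal, Complex.Gamma_ofReal] at hcomplex
  exact_mod_cast hcomplex

lemma intervalIntegrable_sub_rpow_mul_rpow {β ν t : ℝ} (hβ : 0 < β) (hν : 0 < ν) (ht : 0 < t) :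
    IntervalIntegrable (fun s => (t - s) ^ (ν - 1) * s ^ (β - 1)) volume 0 t := by
  apply intervalIntegral.intervalIntegrable_of_integral_ne_zero
  rw [integral_sub_rpow_mul_rpow hβ hν ht]
  exact (mul_pos (Real.rpow_pos_of_pos ht _) (ProbabilityTheory.beta_pos hβ hν)).ne'

end Gamma

section MittagLeffler

variable {α : ℝ}

lemma summable_ml (hα : 0 < α) (β z : ℝ) :
    Summable fun k : ℕ => z ^ k / Real.Gamma (α * k + β) := by
  set M : ℝ := (|z| + 1) ^ α⁻¹
  have hM : 0 < M := by positivity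
  have hMα : M ^ α = |z| + 1 := Real.rpow_inv_rpow (by positivity) hα.ne'
  have harg : Tendsto (fun k : ℕ => α * k + β) atTop atTop :=
    tendsto_atTop_add_const_right _ _ (tendsto_natCast_atTop_atTop.const_mul_atTop hα)
  have hratio : ‖z / M ^ α‖ < 1 := by
    rw [hMα, norm_div, Real.norm_of_nonneg (by positivity : 0 ≤ |z| + 1), Real.norm_eq_abs,
      div_lt_one (by positivity)]
    exact lt_add_one _
  refine summable_of_isBigO_nat ((summable_geometric_of_norm_lt_one hratio).mul_left (M ^ (-β))) ?_
  refine ((Asymptotics.isBigO_refl (fun k : ℕ => z ^ k) atTop).mul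
    ((inv_Gamma_isBigO_rpow_neg hM).comp_tendsto harg)).congr_right fun k => ?_
  rw [Function.comp_apply, neg_add, Real.rpow_add hM, Real.rpow_neg hM.le, Real.rpow_mul hM.le,
    Real.rpow_natCast, div_pow]
  ring

lemma ml_zero_right (α β : ℝ) : ml α β 0 = 1 / Real.Gamma β := by
  rw [ml, tsum_eq_single 0 fun k hk => by simp [hk]]
  simp

lemma ml_eq_inv_Gamma_add (hα : 0 < α) (β z : ℝ) :
    ml α β z = 1 / Real.Gamma β + z * ml α (α + β) z := by
  rw [ml, (summable_ml hα β z).tsum_eq_zero_add, ml, ← tsum_mul_left]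
  congr 1
  · simp
  · refine tsum_congr fun k => ?_
    push_cast
    rw [show α * ((k : ℝ) + 1) + β = α * k + (α + β) by ring]
    ring

lemma norm_ml_term_le (α β : ℝ) {z R : ℝ} (hz : ‖z‖ ≤ R) (k : ℕ) :
    ‖z ^ k / Real.Gamma (α * k + β)‖ ≤ ‖R ^ k / Real.Gamma (α * k + β)‖ := by
  rw [norm_div, norm_div, norm_pow, norm_pow]
  gcongr
  exact hz.trans (le_abs_self R)

lemma continuous_ml (hα : 0 < α) (β : ℝ) : Continuous (ml α β) := by
  refine continuous_iff_continuousAt.2 fun z => ?_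
  have hball : ContinuousOn (ml α β) (Metric.closedBall 0 (‖z‖ + 1)) :=
    continuousOn_tsum (fun k => by fun_prop) (summable_ml hα β (‖z‖ + 1)).norm
      fun k y hy => norm_ml_term_le α β (mem_closedBall_zero_iff.1 hy) k
  refine hball.continuousAt (Metric.closedBall_mem_nhds_of_mem ?_)
  rw [mem_ball_zero_iff]
  exact lt_add_one _

lemma hasSum_integral_mul_ml (hα : 0 < α) (β : ℝ) {a b : ℝ} {w g : ℝ → ℝ}
    (hw : IntervalIntegrable w volume a b) (hg : ContinuousOn g (uIcc a b)) :
    HasSum (fun k : ℕ => ∫ s in a..b, w s * (g s ^ k / Real.Gamma (α * k + β)))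
      (∫ s in a..b, w s * ml α β (g s)) := by
  obtain ⟨R, hR⟩ := isCompact_uIcc.exists_bound_of_continuousOn hg
  have hsum := (summable_ml hα β R).norm
  refine intervalIntegral.hasSum_integral_of_dominated_convergence
    (fun k s => ‖w s‖ * ‖R ^ k / Real.Gamma (α * k + β)‖) (fun k => ?_) (fun k => ?_)
    (.of_forall fun s _ => hsum.mul_left _) ?_
    (.of_forall fun s _ => (summable_ml hα β (g s)).hasSum.mul_left _)
  · exact (hw.mul_continuousOn ((hg.pow k).div_const _)).def'.aestronglyMeasurable
  · refine .of_forall fun s hs => ?_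
    rw [norm_mul]
    gcongr ‖w s‖ * ?_
    exact norm_ml_term_le α β (hR s (uIoc_subset_uIcc hs)) k
  · simp_rw [tsum_mul_left]
    exact hw.norm.mul_const _

end MittagLeffler

section RiemannLiouville

/-- The Riemann–Liouville fractional integral of order `ν` with base point `0`. It is normalised
by `1 / Γ(ν)`, so that the Caputo derivative is `rlIntegral (1 - α)` of the derivative. -/
noncomputable def rlIntegral (ν : ℝ) (f : ℝ → ℝ) (t : ℝ) : ℝ :=
  (1 / Real.Gamma ν) * ∫ s in (0 : ℝ)..t, (t - s) ^ (ν - 1) * f s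

lemma rlIntegral_one (f : ℝ → ℝ) (t : ℝ) : rlIntegral 1 f t = ∫ s in (0 : ℝ)..t, f s := by
  simp [rlIntegral]

lemma rlIntegral_const_mul (ν c : ℝ) (f : ℝ → ℝ) (t : ℝ) :
    rlIntegral ν (fun s => c * f s) t = c * rlIntegral ν f t := by
  simp only [rlIntegral, mul_left_comm _ c, intervalIntegral.integral_const_mul]

lemma rlIntegral_rpow {β ν t : ℝ} (hβ : 0 < β) (hν : 0 < ν) (ht : 0 < t) :
    rlIntegral ν (fun s => s ^ (β - 1)) t =
      Real.Gamma β / Real.Gamma (β + ν) * t ^ (β + ν - 1) := by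
  have hΓν := (Real.Gamma_pos_of_pos hν).ne'
  rw [rlIntegral, integral_sub_rpow_mul_rpow hβ hν ht, ProbabilityTheory.beta]
  field_simp

lemma caputo_eq_rlIntegral_of_hasDerivAt {α t : ℝ} {f f' : ℝ → ℝ} (ht : 0 ≤ t)
    (hf : ∀ s ∈ Ioc 0 t, HasDerivAt f (f' s) s) : caputo α f t = rlIntegral (1 - α) f' t := by
  rw [caputo, rlIntegral, sub_sub_cancel_left, intervalIntegral.integral_of_le ht,
    intervalIntegral.integral_of_le ht,
    setIntegral_congr_fun measurableSet_Ioc fun s hs => by rw [(hf s hs).deriv]]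

end RiemannLiouville

section MittagLefflerKernel

/-- The Mittag-Leffler kernel `t ↦ t^(β-1) E_{α,β}(c t^α)`, the fractional analogue of the
exponential `exp (c t)`: fractional integration acts on this family by shifting `β`. -/
noncomputable def mlKernel (α β c t : ℝ) : ℝ := t ^ (β - 1) * ml α β (c * t ^ α)

variable {α β c t : ℝ}

lemma mlKernel_one (α c : ℝ) : mlKernel α 1 c = fun t => ml α 1 (c * t ^ α) := by
  ext t
  simp [mlKernel]

lemma mlKernel_eq_rpow_add (hα : 0 < α) (ht : 0 < t) :
    mlKernel α β c t = t ^ (β - 1) / Real.Gamma β + c * mlKernel α (α + β) c t := by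
  rw [mlKernel, mlKernel, ml_eq_inv_Gamma_add hα, add_sub_assoc, Real.rpow_add ht]
  ring

lemma rpow_mul_ml_term (β c : ℝ) (ht : 0 < t) (k : ℕ) :
    t ^ (β - 1) * ((c * t ^ α) ^ k / Real.Gamma (α * k + β)) =
      c ^ k / Real.Gamma (α * k + β) * t ^ (α * k + β - 1) := by
  rw [add_sub_assoc, Real.rpow_add ht, Real.rpow_mul_natCast ht.le, mul_pow]
  ring

lemma hasSum_mlKernel (hα : 0 < α) (ht : 0 < t) :
    HasSum (fun k : ℕ => c ^ k / Real.Gamma (α * k + β) * t ^ (α * k + β - 1))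
      (mlKernel α β c t) :=
  ((summable_ml hα β (c * t ^ α)).hasSum.mul_left (t ^ (β - 1))).congr_fun
    fun k => (rpow_mul_ml_term β c ht k).symm

lemma hasSum_rlIntegral_mlKernel {ν : ℝ} (hα : 0 < α) (hβ : 0 < β) (hν : 0 < ν) (ht : 0 < t) :
    HasSum
      (fun k : ℕ => rlIntegral ν
        (fun s => c ^ k / Real.Gamma (α * k + β) * s ^ (α * k + β - 1)) t)
      (rlIntegral ν (mlKernel α β c) t) := by
  have hcont : ContinuousOn (fun s : ℝ => c * s ^ α) (uIcc 0 t) :=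
    (continuous_const.mul (Real.continuous_rpow_const hα.le)).continuousOn
  have hsum := (hasSum_integral_mul_ml hα β
    (intervalIntegrable_sub_rpow_mul_rpow hβ hν ht) hcont).mul_left (1 / Real.Gamma ν)
  simp_rw [mul_assoc ((t - _) ^ (ν - 1))] at hsum
  refine hsum.congr_fun fun k => ?_
  rw [rlIntegral, intervalIntegral.integral_of_le ht.le, intervalIntegral.integral_of_le ht.le]
  congr 1
  refine setIntegral_congr_fun measurableSet_Ioc fun s hs => ?_
  simp only [rpow_mul_ml_term β c hs.1 k]

lemma rlIntegral_mlKernel {ν : ℝ} (hα : 0 < α) (hβ : 0 < β) (hν : 0 < ν) (ht : 0 < t) :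
    rlIntegral ν (mlKernel α β c) t = mlKernel α (β + ν) c t := by
  refine (hasSum_rlIntegral_mlKernel hα hβ hν ht).unique
    ((hasSum_mlKernel hα ht).congr_fun fun k => ?_)
  have hpos : 0 < α * k + β := by positivity
  have hΓ := (Real.Gamma_pos_of_pos hpos).ne'
  rw [rlIntegral_const_mul, rlIntegral_rpow hpos hν ht, ← add_assoc]
  field_simp

lemma continuousAt_mlKernel (hα : 0 < α) (ht : t ≠ 0) : ContinuousAt (mlKernel α β c) t :=
  (Real.continuousAt_rpow_const t _ (.inl ht)).mul ((continuous_ml hα β).continuousAt.comp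
    (continuousAt_const.mul (Real.continuousAt_rpow_const t _ (.inl ht))))

lemma intervalIntegrable_mlKernel (hα : 0 < α) (hβ : 0 < β) (a b : ℝ) :
    IntervalIntegrable (mlKernel α β c) volume a b :=
  (intervalIntegral.intervalIntegrable_rpow' (by linarith)).mul_continuousOn
    ((continuous_ml hα β).comp
      (continuous_const.mul (Real.continuous_rpow_const hα.le))).continuousOn

lemma hasDerivAt_mlKernel_add_one (hα : 0 < α) (hβ : 0 < β) (ht : 0 < t) :
    HasDerivAt (mlKernel α (β + 1) c) (mlKernel α β c t) t := by
  have hprimitive : mlKernel α (β + 1) c =ᶠ[𝓝 t] fun u => ∫ s in (0 : ℝ)..u, mlKernel α β c s := by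
    filter_upwards [Ioi_mem_nhds ht] with u hu
    rw [← rlIntegral_mlKernel hα hβ one_pos hu, rlIntegral_one]
  have hmeas : StronglyMeasurableAtFilter (mlKernel α β c) (𝓝 t) :=
    ContinuousAt.stronglyMeasurableAtFilter isOpen_Ioi
      (fun s hs => continuousAt_mlKernel hα (mem_Ioi.1 hs).ne') t ht
  exact (intervalIntegral.integral_hasDerivAt_right (intervalIntegrable_mlKernel hα hβ 0 t) hmeas
    (continuousAt_mlKernel hα ht.ne')).congr_of_eventuallyEq hprimitive

lemma hasDerivAt_mlKernel_one (hα : 0 < α) (ht : 0 < t) :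
    HasDerivAt (mlKernel α 1 c) (c * mlKernel α α c t) t := by
  have hrec : mlKernel α 1 c =ᶠ[𝓝 t] fun s => 1 + c * mlKernel α (α + 1) c s := by
    filter_upwards [Ioi_mem_nhds ht] with s hs
    simp [mlKernel_eq_rpow_add (β := 1) hα hs]
  exact (((hasDerivAt_mlKernel_add_one hα hα ht).const_mul c).const_add 1).congr_of_eventuallyEq
    hrec

lemma caputo_mlKernel_one (hα : 0 < α) (hα1 : α < 1) (ht : 0 < t) :
    caputo α (mlKernel α 1 c) t = c * mlKernel α 1 c t := by
  calc caputo α (mlKernel α 1 c) t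
      = rlIntegral (1 - α) (fun s => c * mlKernel α α c s) t :=
        caputo_eq_rlIntegral_of_hasDerivAt ht.le fun s hs => hasDerivAt_mlKernel_one hα hs.1
    _ = c * mlKernel α (α + (1 - α)) c t := by
        rw [rlIntegral_const_mul, rlIntegral_mlKernel hα hα (sub_pos.2 hα1) ht]
    _ = c * mlKernel α 1 c t := by rw [add_sub_cancel]

end MittagLefflerKernel

theorem mittagLeffler_solves_fractional_ode_general (α lam : ℝ) (hα : 0 < α) (hα1 : α < 1) :
    (∀ t : ℝ, 0 < t →
      caputo α (fun s => ml α 1 (-lam * s ^ α)) t + lam * ml α 1 (-lam * t ^ α) = 0) ∧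
    ml α 1 (-lam * (0 : ℝ) ^ α) = 1 := by
  refine ⟨fun t ht => ?_, ?_⟩
  · have hode := caputo_mlKernel_one (c := -lam) hα hα1 ht
    rw [mlKernel_one] at hode
    rw [hode]
    ring
  · rw [Real.zero_rpow hα.ne', mul_zero, ml_zero_right, Real.Gamma_one, div_one]

/-- for `0<α<1` and `λ ≥ 0`, `T(t) = E_α(−λ t^α)` satisfies
`(D^α T)(t) + λ T(t) = 0` for all `t > 0`, and `T(0) = 1`. -/
theorem mittagLeffler_solves_fractional_ode (α lam : ℝ)
    (hα : 0 < α) (hα1 : α < 1) (hlam : 0 ≤ lam) :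
    (∀ t : ℝ, 0 < t →
      caputo α (fun s => ml α 1 (-lam * s ^ α)) t + lam * ml α 1 (-lam * t ^ α) = 0) ∧
    ml α 1 (-lam * (0:ℝ) ^ α) = 1 :=
  mittagLeffler_solves_fractional_ode_general α lam hα hα1
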